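/- (Pickands–Balkema–de Haan.) Let F be a cumulative distribution function on ℝ with right endpoint x_F = sup{x : F(x) < 1} ∈ (−∞, ∞], and suppose F lies in the maximum domain of attraction of a generalized extreme value distribution with index ξ ≠ 0: there exist reals a_n > 0 and b_n such that for every x with 1 + ξx > 0, F(a_n·x + b_n)^n → exp(−(1 + ξx)^{−1/ξ}) as n → ∞. For t < x_F define the conditional excess distribution function F_t(x) = (F(t + x) − F(t))/(1 − F(t)) for 0 ≤ x < x_F − t. Then there exists a positive function t ↦ σ(t) such that lim_{t → x_F} sup_{0 ≤ x < x_F − t} |F_t(x) − H_{ξ,σ(t)}(x)| = 0, where H_{ξ,σ}(x) = 1 − (1 + ξx/σ)^{−1/ξ}. -/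

import Mathlib

open Filter Topology

/-- Log-linearisation: `p_n^n → e^{-g}` implies `n (1 - p_n) → g`. -/
lemma pbd_log (p : ℕ → ℝ) (g : ℝ) (h0 : ∀ n, 0 ≤ p n) 
    (h : Tendsto (fun n => p n ^ n) atTop (𝓝 (Real.exp (-g)))) :
    Tendsto (fun n : ℕ => (n : ℝ) * (1 - p n)) atTop (𝓝 g) := by
  have hpos : ∀ᶠ n in atTop, 0 < p n := by
    filter_upwards [h.eventually (lt_mem_nhds (Real.exp_pos _)), eventually_gt_atTop 0] with n hn hn0
    rcases (h0 n).lt_or_eq with h' | h'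
    · exact h'
    · rw [← h', zero_pow hn0.ne'] at hn
      exact absurd hn (lt_irrefl _)
  have hlog : Tendsto (fun n : ℕ => (n : ℝ) * Real.log (p n)) atTop (𝓝 (-g)) := by
    have := (Real.continuousAt_log (Real.exp_pos (-g)).ne').tendsto.comp h
    rw [Real.log_exp] at this
    refine this.congr fun n => ?_
    simp [Real.log_pow]
  have hlog0 : Tendsto (fun n : ℕ => Real.log (p n)) atTop (𝓝 0) := by
    have := hlog.mul (tendsto_inv_atTop_nhds_zero_nat (𝕜 := ℝ))
    rw [mul_zero] at this
    refine this.congr' ?_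
    filter_upwards [eventually_gt_atTop 0] with n hn
    have : (n : ℝ) ≠ 0 := by positivity
    field_simp
  have hp1 : Tendsto p atTop (𝓝 1) := by
    have := (Real.continuous_exp.tendsto 0).comp hlog0
    rw [Real.exp_zero] at this
    refine this.congr' ?_
    filter_upwards [hpos] with n hn
    simp [Real.exp_log hn]
  have hup : Tendsto (fun n : ℕ => -((n : ℝ) * Real.log (p n))) atTop (𝓝 g) := by
    simpa using hlog.neg
  have hlo : Tendsto (fun n : ℕ => p n * -((n : ℝ) * Real.log (p n))) atTop (𝓝 g) := by
    simpa using hp1.mul hup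
  refine tendsto_of_tendsto_of_tendsto_of_le_of_le' hlo hup ?_ ?_
  · filter_upwards [hpos] with n hn
    have h2 := Real.log_le_sub_one_of_pos (inv_pos.2 hn)
    rw [Real.log_inv] at h2
    have h3 : p n * -Real.log (p n) ≤ 1 - p n := by
      calc p n * -Real.log (p n) ≤ p n * ((p n)⁻¹ - 1) := by gcongr
        _ = 1 - p n := by field_simp
    have : (n : ℝ) * (p n * -Real.log (p n)) ≤ n * (1 - p n) := by gcongr
    linarith
  · filter_upwards [hpos] with n hn
    have h2 := Real.log_le_sub_one_of_pos hn
    have : (n : ℝ) * (1 - p n) ≤ n * (-Real.log (p n)) := by gcongr; linarith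
    linarith

/-- Pólya-type lemma. -/
lemma pbd_polya {T : Type*} (L : Filter T) (Q : T → ℝ → ℝ) (h : ℝ → ℝ) (δ : ℝ) (hδ : 0 < δ)
    (hQ : ∀ᶠ t in L, Antitone (Q t)) (hQ0 : ∀ᶠ t in L, ∀ w, 0 ≤ Q t w) (hh0 : ∀ w, 0 ≤ w → 0 ≤ h w)
    (hc : ∀ w, -δ < w → ContinuousAt h w) (hlim : Tendsto h atTop (𝓝 0))
    (hpt : ∀ w, -δ < w → Tendsto (fun t => Q t w) L (𝓝 (h w))) (ε : ℝ) (hε : 0 < ε) :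
    ∀ᶠ t in L, ∀ w, 0 ≤ w → |Q t w - h w| < ε := by
  have hloc : ∀ u, 0 ≤ u → ∃ s ∈ 𝓝 u, ∀ᶠ t in L, ∀ w ∈ s, |Q t w - h w| < ε := by
    intro u hu
    have h1 : ∀ᶠ w in 𝓝 u, |h w - h u| < ε / 4 := by
      have := Metric.tendsto_nhds.1 (hc u (by linarith)).tendsto (ε/4) (by positivity)
      simpa [Real.dist_eq] using this
    obtain ⟨r, hr, hr'⟩ := Metric.eventually_nhds_iff.1 h1
    set k := min (r/2) (δ/2) with hk
    have hk0 : 0 < k := by positivity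
    have hkr : k < r := lt_of_le_of_lt (min_le_left _ _) (by linarith)
    have hkd : k < δ := lt_of_le_of_lt (min_le_right _ _) (by linarith)
    have hH : ∀ w, u - k ≤ w → w ≤ u + k → |h w - h u| < ε/4 := by
      intro w h1 h2
      apply hr'
      rw [Real.dist_eq, abs_lt]; constructor <;> linarith
    refine ⟨Set.Icc (u-k) (u+k), Icc_mem_nhds (by linarith) (by linarith), ?_⟩
    have e1 := Metric.tendsto_nhds.1 (hpt (u-k) (by linarith)) (ε/4) (by positivity)
    have e2 := Metric.tendsto_nhds.1 (hpt (u+k) (by linarith)) (ε/4) (by positivity)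
    filter_upwards [e1, e2, hQ] with t h1 h2 hm w hw
    rw [Real.dist_eq, abs_lt] at h1 h2
    have a1 := abs_lt.1 (hH w hw.1 hw.2)
    have a2 := abs_lt.1 (hH (u-k) le_rfl (by linarith))
    have a3 := abs_lt.1 (hH (u+k) (by linarith) le_rfl)
    have m1 := hm hw.1
    have m2 := hm hw.2
    rw [abs_lt]; constructor <;> linarith
  obtain ⟨M, hM⟩ := eventually_atTop.1 (hlim.eventually (gt_mem_nhds (show 0 < ε/2 by positivity)))
  set N := max M 0
  have hcomp : ∀ᶠ t in L, ∀ w ∈ Set.Icc 0 N, |Q t w - h w| < ε := by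
    refine (isCompact_Icc (a := (0:ℝ)) (b := N)).induction_on
      (p := fun s => ∀ᶠ t in L, ∀ w ∈ s, |Q t w - h w| < ε) ?_ ?_ ?_ ?_
    · simp
    · intro s t hst ht
      filter_upwards [ht] with x hx w hw using hx w (hst hw)
    · intro s t hs ht
      filter_upwards [hs, ht] with x hx hy w hw
      exact hw.elim (hx w) (hy w)
    · intro x hx
      obtain ⟨s, hs, h⟩ := hloc x hx.1
      exact ⟨s, mem_nhdsWithin_of_mem_nhds hs, h⟩
  have hN0 : 0 ≤ N := le_max_right _ _
  have e1 := Metric.tendsto_nhds.1 (hpt N (by linarith)) (ε/2) (by positivity)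
  filter_upwards [hcomp, e1, hQ, hQ0] with t h1 h2 h3 h4 w hw
  rcases le_total w N with h | h'
  · exact h1 w ⟨hw, h⟩
  · rw [Real.dist_eq, abs_lt] at h2
    have := hM N (le_max_left _ _)
    have := hM w ((le_max_left _ _).trans h')
    have := hh0 w hw
    have := h4 w
    have := h3 h'
    rw [abs_lt]; constructor <;> linarith

/-- Endpoint lemma. -/
lemma pbd_endpoint (S : ℝ → ℝ) (hS : Antitone S) (c d : ℕ → ℝ) (hc : ∀ n, 0 < c n)
    (β : ℝ) (hβ : 0 < β)
    (h : ∀ y, 0 < y → Tendsto (fun n : ℕ => (n:ℝ) * S (d n - c n * y)) atTop (𝓝 (y ^ β)))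
    (D : ℝ) (hD : 0 < D) :
    ∀ᶠ n in atTop, ∀ t, 0 < S t → t ≤ d n + D * c n := by
  have htwo : Tendsto (fun n : ℕ => 2 * n) atTop atTop :=
    tendsto_id.const_mul_atTop' (by norm_num)
  have h2 : ∀ y, 0 < y →
      Tendsto (fun n : ℕ => (n:ℝ) * S (d (2*n) - c (2*n) * y)) atTop (𝓝 (y ^ β / 2)) := by
    intro y hy
    have := ((h y hy).comp htwo).div_const 2
    refine this.congr fun n => ?_
    simp only [Function.comp]; push_cast; ring
  obtain ⟨K, hK1, hKβ⟩ : ∃ K : ℝ, 1 < K ∧ K ^ β = 2 := by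
    refine ⟨2 ^ (1/β), Real.one_lt_rpow (by norm_num) (by positivity), ?_⟩
    rw [← Real.rpow_mul (by norm_num)]; field_simp; simp
  have hA : ∀ y z, 0 < y → 0 < z → z < K * y →
      ∀ᶠ n in atTop, d n - c n * y < d (2*n) - c (2*n) * z := by
    intro y z hy hz hzy
    have : z ^ β / 2 < y ^ β := by
      have := Real.rpow_lt_rpow hz.le hzy hβ
      rw [Real.mul_rpow (by linarith) hy.le, hKβ] at this
      linarith
    filter_upwards [(h2 z hz).eventually_lt (h y hy) this] with n hn
    by_contra! hcon
    have := mul_le_mul_of_nonneg_left (hS hcon) (Nat.cast_nonneg (α := ℝ) n)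
    linarith
  have hB : ∀ y z, 0 < y → 0 < z → K * y < z →
      ∀ᶠ n in atTop, d (2*n) - c (2*n) * z < d n - c n * y := by
    intro y z hy hz hzy
    have : y ^ β < z ^ β / 2 := by
      have := Real.rpow_lt_rpow (by nlinarith) hzy hβ
      rw [Real.mul_rpow (by linarith) hy.le, hKβ] at this
      linarith
    filter_upwards [(h y hy).eventually_lt (h2 z hz) this] with n hn
    by_contra! hcon
    have := mul_le_mul_of_nonneg_left (hS hcon) (Nat.cast_nonneg (α := ℝ) n)
    linarith
  set η := (K - 1) / 4 with hη
  have hη0 : 0 < η := by rw [hη]; linarith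
  -- `q = 1 / (K - 2η)`, with `K - 2 η = (K+1)/2 =: R > 1`
  set δ := D * (1 - 2 / (K + 1)) with hδ
  have hq1 : 2 / (K+1) < 1 := by rw [div_lt_one (by linarith)]; linarith
  have hq0 : 0 < 2 / (K+1) := by apply div_pos <;> linarith
  set q := 2 / (K+1) with hq
  have hδ0 : 0 < δ := mul_pos hD (by linarith)
  have step : ∀ᶠ n in atTop, d (2*n) + D * c (2*n) ≤ d n + D * c n := by
    filter_upwards [hA 2 (2*K-η) (by norm_num) (by rw [hη]; linarith) (by linarith),
      hB 1 (K+η) (by norm_num) (by linarith) (by linarith),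
      hB (δ/(2*K)) δ (by positivity) hδ0 (by field_simp; linarith)] with n h1 h2 h3
    have hcm := hc (2*n)
    have hcn := hc n
    have e1 : c (2*n) * ((K+1)/2) ≤ c n := by
      have : (K+1)/2 = (2*K-η) - (K+η) := by rw [hη]; ring
      rw [this]; nlinarith
    have e2 : c (2*n) ≤ q * c n := by
      rw [hq, div_mul_eq_mul_div, le_div_iff₀ (by linarith)]; linarith
    have e3 : d (2*n) ≤ d n + c (2*n) * δ := by
      have : 0 < c n * (δ/(2*K)) := by positivity
      linarith
    have e4 : c (2*n) * δ ≤ c n * δ := by gcongr; nlinarith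
    have e5 : D * c (2*n) ≤ D * (q * c n) := by gcongr
    have : d n + c n * δ + D * (q * c n) = d n + D * c n := by rw [hδ]; ring
    linarith
  have hS0 : Tendsto (fun n => S (d n - c n * 1)) atTop (𝓝 0) := by
    have := (h 1 one_pos).mul (tendsto_inv_atTop_nhds_zero_nat (𝕜 := ℝ))
    rw [mul_zero] at this
    refine this.congr' ?_
    filter_upwards [eventually_gt_atTop 0] with n hn
    have : (n : ℝ) ≠ 0 := by positivity
    field_simp
  obtain ⟨N, hN⟩ := eventually_atTop.1 step
  filter_upwards [eventually_ge_atTop N, eventually_gt_atTop 0] with n hn hn0 t ht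
  have hind : ∀ j : ℕ, d (2^j*n) + D * c (2^j*n) ≤ d n + D * c n := by
    intro j
    induction j with
    | zero => simp
    | succ j ih =>
      refine le_trans ?_ ih
      have := hN (2^j*n) (hn.trans (Nat.le_mul_of_pos_left n (by positivity)))
      rwa [← mul_assoc, ← pow_succ'] at this
  have htd : Tendsto (fun j : ℕ => 2^j*n) atTop atTop :=
    (tendsto_pow_atTop_atTop_of_one_lt (by norm_num : 1 < 2)).atTop_mul_const' hn0
  obtain ⟨j, hj⟩ := ((hS0.comp htd).eventually (gt_mem_nhds ht)).exists
  have h3 : t < d (2^j*n) - c (2^j*n) * 1 := by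
    by_contra! hcon
    exact absurd (hS hcon) (not_le.2 hj)
  have := hind j
  have h5 := hc (2^j*n)
  nlinarith [mul_pos hD h5]

/-- The limiting excess tail, truncated at zero. -/
noncomputable def pbdH (ξ u : ℝ) : ℝ := (max 0 (1 + ξ * u)) ^ (-1 / ξ)

lemma pbdH_of_pos {ξ u : ℝ} (h : 0 ≤ 1 + ξ * u) : pbdH ξ u = (1 + ξ * u) ^ (-1 / ξ) := by
  rw [pbdH, max_eq_right h]

lemma pbd_exp_neg {ξ : ℝ} (h : 0 < ξ) : -1 / ξ < 0 := div_neg_of_neg_of_pos (by norm_num) h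

lemma pbd_exp_pos {ξ : ℝ} (h : ξ < 0) : 0 < -1 / ξ := div_pos_of_neg_of_neg (by norm_num) h

lemma pbdH_of_neg {ξ u : ℝ} (hξ : ξ < 0) (h : 1 + ξ * u ≤ 0) : pbdH ξ u = 0 := by
  rw [pbdH, max_eq_left h, Real.zero_rpow (pbd_exp_pos hξ).ne']

lemma pbdH_nonneg (ξ u : ℝ) : 0 ≤ pbdH ξ u := Real.rpow_nonneg (le_max_left _ _) _

lemma pbdH_base_pos {ξ u : ℝ} (hξ : 0 < ξ) (hu : -(1 / |ξ|) < u) : 0 < 1 + ξ * u := by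
  rw [abs_of_pos hξ] at hu
  have := mul_lt_mul_of_pos_left hu hξ
  have h2 : ξ * -(1/ξ) = -1 := by field_simp
  linarith

lemma pbdH_cont {ξ : ℝ} (hξ : ξ ≠ 0) (u : ℝ) (hu : -(1 / |ξ|) < u) : ContinuousAt (pbdH ξ) u := by
  unfold pbdH
  have hb : ContinuousAt (fun u : ℝ => max 0 (1 + ξ * u)) u := by fun_prop
  refine hb.rpow_const ?_
  rcases hξ.lt_or_gt with h | h
  · exact Or.inr (pbd_exp_pos h).le
  · exact Or.inl (lt_max_of_lt_right (pbdH_base_pos h hu)).ne'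

lemma pbdH_lim {ξ : ℝ} (hξ : ξ ≠ 0) : Tendsto (pbdH ξ) atTop (𝓝 0) := by
  rcases hξ.lt_or_gt with h | h
  · refine tendsto_const_nhds.congr' ?_
    filter_upwards [eventually_ge_atTop (-1/ξ)] with u hu
    rw [pbdH_of_neg h]
    have := mul_le_mul_of_nonpos_left hu h.le
    have h2 : ξ * (-1/ξ) = -1 := by field_simp
    linarith
  · have h1 : Tendsto (fun u : ℝ => 1 + ξ * u) atTop atTop :=
      tendsto_atTop_add_const_left _ _ (tendsto_id.const_mul_atTop h)
    have h2 := (tendsto_rpow_neg_atTop (y := 1/ξ) (by positivity)).comp h1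
    refine h2.congr' ?_
    filter_upwards [eventually_ge_atTop 0] with u hu
    rw [pbdH_of_pos (by positivity)]
    simp [neg_div]

lemma pbdH_lt_one {ξ : ℝ} (hξ : ξ ≠ 0) {u : ℝ} (hu : 0 < u) : pbdH ξ u < 1 := by
  rcases hξ.lt_or_gt with h | h
  · have := mul_neg_of_neg_of_pos h hu
    exact Real.rpow_lt_one (le_max_left _ _) (max_lt one_pos (by linarith)) (pbd_exp_pos h)
  · have := mul_pos h hu
    rw [pbdH_of_pos (by positivity)]
    exact Real.rpow_lt_one_of_one_lt_of_neg (by linarith) (pbd_exp_neg h)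

lemma pbdH_one_lt {ξ : ℝ} (hξ : ξ ≠ 0) {u : ℝ} (hu : u < 0) (hu' : -(1 / |ξ|) < u) :
    1 < pbdH ξ u := by
  rcases hξ.lt_or_gt with h | h
  · have := mul_pos_of_neg_of_neg h hu
    rw [pbdH_of_pos (by positivity)]
    exact Real.one_lt_rpow (by linarith) (pbd_exp_pos h)
  · have := mul_neg_of_pos_of_neg h hu
    have h2 := pbdH_base_pos h hu'
    rw [pbdH_of_pos h2.le]
    exact Real.one_lt_rpow_of_pos_of_lt_one_of_neg h2 (by linarith) (pbd_exp_neg h)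

/-- Pointwise convergence of the rescaled tails, past the endpoint as well. -/
lemma pbd_pointwise (S : ℝ → ℝ) (hS : Antitone S) (hS0 : ∀ x, 0 ≤ S x) {ξ : ℝ} (hξ : ξ ≠ 0)
    (a b : ℕ → ℝ) (ha : ∀ n, 0 < a n)
    (h : ∀ x, 0 < 1 + ξ * x →
      Tendsto (fun n : ℕ => (n:ℝ) * S (a n * x + b n)) atTop (𝓝 ((1 + ξ * x) ^ (-1 / ξ))))
    (u : ℝ) (hu : -(1 / |ξ|) < u) :
    Tendsto (fun n : ℕ => (n:ℝ) * S (a n * u + b n)) atTop (𝓝 (pbdH ξ u)) := by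
  rcases lt_or_ge 0 (1 + ξ * u) with h1 | h1
  · rw [pbdH_of_pos h1.le]; exact h u h1
  have hneg : ξ < 0 := by
    rcases hξ.lt_or_gt with h' | h'
    · exact h'
    · exact absurd (pbdH_base_pos h' hu) (not_lt.2 h1)
  rw [pbdH_of_neg hneg h1, Metric.tendsto_nhds]
  intro ε hε
  have hβ := pbd_exp_pos hneg
  -- choose a base `y` with `y ^ β < ε`
  have hy : Tendsto (fun y : ℝ => y ^ (-1/ξ)) (𝓝[>] 0) (𝓝 0) := by
    have := (Real.continuousAt_rpow_const 0 (-1/ξ) (Or.inr hβ.le)).tendsto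
    rw [Real.zero_rpow hβ.ne'] at this
    exact this.mono_left nhdsWithin_le_nhds
  obtain ⟨y, hy1, hy0⟩ := ((hy.eventually (gt_mem_nhds hε)).and self_mem_nhdsWithin).exists
  have hy0 : 0 < y := hy0
  have hxy : 1 + ξ * ((y-1)/ξ) = y := by field_simp; ring
  have hle : (y-1)/ξ ≤ u := by
    by_contra! hc
    have := mul_lt_mul_of_neg_left hc hneg
    linarith
  have ht := h ((y-1)/ξ) (by rw [hxy]; exact hy0)
  rw [hxy] at ht
  filter_upwards [ht.eventually (gt_mem_nhds hy1)] with n hn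
  rw [Real.dist_eq, sub_zero, abs_of_nonneg (mul_nonneg (Nat.cast_nonneg _) (hS0 _))]
  refine lt_of_le_of_lt ?_ hn
  have := ha n
  gcongr
  exact hS (by gcongr)

/-- Core: locations and uniform convergence along a filter where the tail vanishes. -/
lemma pbd_core (S : ℝ → ℝ) (hS : Antitone S) (hS0 : ∀ x, 0 ≤ S x) {ξ : ℝ} (hξ : ξ ≠ 0)
    (a b : ℕ → ℝ) (ha : ∀ n, 0 < a n)
    (h : ∀ u, -(1 / |ξ|) < u →
      Tendsto (fun n : ℕ => (n:ℝ) * S (a n * u + b n)) atTop (𝓝 (pbdH ξ u)))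
    (L : Filter ℝ) (hLpos : ∀ᶠ t in L, 0 < S t) (hL0 : Tendsto S L (𝓝 0)) :
    ∃ N : ℝ → ℕ, Tendsto N L atTop ∧
      (∀ ε, 0 < ε → ∀ᶠ t in L, |t - b (N t)| < ε * a (N t)) ∧
      ∀ ε, 0 < ε → ∀ᶠ t in L, ∀ w, 0 ≤ w → |S (t + a (N t) * w) / S t - pbdH ξ w| < ε := by
  have hδ : 0 < 1 / |ξ| := by positivity
  have hinv : Tendsto (fun t => (S t)⁻¹) L atTop :=
    (tendsto_nhdsWithin_iff.2 ⟨hL0, hLpos⟩).inv_tendsto_nhdsGT_zero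
  set N : ℝ → ℕ := fun t => ⌊(S t)⁻¹⌋₊ with hN
  have hNt : Tendsto N L atTop := tendsto_nat_floor_atTop.comp hinv
  have hN1 : Tendsto (fun t => (N t : ℝ) * S t) L (𝓝 1) := by
    refine ((tendsto_nat_floor_div_atTop (R := ℝ)).comp hinv).congr fun t => ?_
    simp [hN]
  have hloc : ∀ ε, 0 < ε → ∀ᶠ t in L, |t - b (N t)| < ε * a (N t) := by
    intro ε hε
    set e := min ε (1 / |ξ| / 2) with he
    have he0 : 0 < e := by positivity
    have hed : e < 1 / |ξ| := lt_of_le_of_lt (min_le_right _ _) (by linarith)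
    have h1 := ((h e (by linarith)).comp hNt).eventually_lt hN1 (pbdH_lt_one hξ he0)
    have h2 := hN1.eventually_lt ((h (-e) (by linarith)).comp hNt)
      (pbdH_one_lt hξ (by linarith) (by linarith))
    filter_upwards [h1, h2] with t h1 h2
    simp only [Function.comp] at h1 h2
    have hN0 : (0:ℝ) ≤ N t := Nat.cast_nonneg _
    have c1 : t < a (N t) * e + b (N t) := by
      by_contra! hc
      have := mul_le_mul_of_nonneg_left (hS hc) hN0
      linarith
    have c2 : a (N t) * (-e) + b (N t) < t := by
      by_contra! hc
      have := mul_le_mul_of_nonneg_left (hS hc) hN0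
      linarith
    have : e * a (N t) ≤ ε * a (N t) := by
      have := ha (N t)
      gcongr
      exact min_le_left _ _
    rw [abs_lt]; constructor <;> linarith
  refine ⟨N, hNt, hloc, ?_⟩
  have hpt : ∀ w, -(1/|ξ|) < w →
      Tendsto (fun t => S (t + a (N t) * w) / S t) L (𝓝 (pbdH ξ w)) := by
    intro w hw
    have key : Tendsto (fun t => (N t : ℝ) * S (t + a (N t) * w)) L (𝓝 (pbdH ξ w)) := by
      rw [Metric.tendsto_nhds]
      intro ε hε
      obtain ⟨r, hr, hr'⟩ := Metric.continuousAt_iff.1 (pbdH_cont hξ w hw) (ε/2) (by positivity)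
      obtain ⟨e, he0, he⟩ : ∃ e, 0 < e ∧ e < min r (w + 1/|ξ|) :=
        exists_between (lt_min hr (by linarith))
      have her := he.trans_le (min_le_left _ _)
      have hew := he.trans_le (min_le_right _ _)
      have d1 := hr' (x := w + e) (by rw [Real.dist_eq]; simpa [abs_of_pos he0] using her)
      have d2 := hr' (x := w - e) (by rw [Real.dist_eq]; simpa [abs_of_pos he0] using her)
      have e1 := Metric.tendsto_nhds.1 ((h (w+e) (by linarith)).comp hNt) (ε/2) (by positivity)
      have e2 := Metric.tendsto_nhds.1 ((h (w-e) (by linarith)).comp hNt) (ε/2) (by positivity)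
      filter_upwards [e1, e2, hloc e he0] with t e1 e2 e3
      simp only [Function.comp, Real.dist_eq, abs_lt] at *
      have hN0 : (0:ℝ) ≤ N t := Nat.cast_nonneg _
      have m1 : (N t : ℝ) * S (a (N t) * (w+e) + b (N t)) ≤ N t * S (t + a (N t) * w) := by
        gcongr; apply hS; linarith
      have m2 : (N t : ℝ) * S (t + a (N t) * w) ≤ N t * S (a (N t) * (w-e) + b (N t)) := by
        gcongr; apply hS; linarith
      constructor <;> linarith
    have := key.div hN1 one_ne_zero
    rw [div_one] at this
    refine this.congr' ?_
    filter_upwards [hNt.eventually (eventually_gt_atTop 0)] with t ht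
    have : (N t : ℝ) ≠ 0 := by positivity
    simp only [Pi.div_apply]
    rw [mul_div_mul_left _ _ this]
  intro ε hε
  refine pbd_polya L (fun t w => S (t + a (N t) * w) / S t) (pbdH ξ) (1/|ξ|) hδ ?_ ?_
    (fun w _ => pbdH_nonneg ξ w) (pbdH_cont hξ) (pbdH_lim hξ) hpt ε hε
  · refine Eventually.of_forall fun t x y hxy => ?_
    have := ha (N t)
    have := hS0 t
    simp only
    gcongr
    exact hS (by gcongr)
  · exact Eventually.of_forall fun t w => div_nonneg (hS0 _) (hS0 _)


/-- **Pickands–Balkema–de Haan.** Let `F` be a CDF on `ℝ` with right endpoint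
`x_F = sup {x : F(x) < 1} ∈ (−∞, ∞]`, lying in the maximum domain of attraction of a
generalized extreme value distribution with index `ξ ≠ 0`: there are `a_n > 0`, `b_n`
with `F(a_n x + b_n)^n → exp(−(1 + ξx)^(−1/ξ))` for all `x` with `1 + ξx > 0`. Then
there is a positive scale function `σ(t)` such that the conditional excess CDF
`F_t(x) = (F(t + x) − F(t))/(1 − F(t))` satisfies
`sup_{0 ≤ x < x_F − t} |F_t(x) − H_{ξ,σ(t)}(x)| → 0` as `t → x_F`, where
`H_{ξ,σ}(x) = 1 − (1 + ξx/σ)^(−1/ξ)`. -/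
theorem pickands_balkema_deHaan (F : ℝ → ℝ) (ξ : ℝ) (hξ : ξ ≠ 0)
    (hFmono : Monotone F)
    (hF0 : Tendsto F atBot (𝓝 0)) (hF1 : Tendsto F atTop (𝓝 1))
    (xF : EReal) (hxF : xF = sSup {y : EReal | ∃ x : ℝ, y = (x : EReal) ∧ F x < 1})
    (a b : ℕ → ℝ) (ha : ∀ n, 0 < a n)
    (hMDA : ∀ x : ℝ, 1 + ξ * x > 0 →
      Tendsto (fun n : ℕ => F (a n * x + b n) ^ n) atTop
        (𝓝 (Real.exp (-(1 + ξ * x) ^ (-1 / ξ))))) :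
    ∃ σ : ℝ → ℝ, (∀ t : ℝ, (t : EReal) < xF → 0 < σ t) ∧
      Tendsto (fun t : ℝ =>
          sSup {v : ℝ | ∃ x : ℝ, 0 ≤ x ∧ ((t + x : ℝ) : EReal) < xF ∧
            v = |(F (t + x) - F t) / (1 - F t) -
                  (1 - (1 + ξ * x / σ t) ^ (-1 / ξ))|})
        (Filter.comap (fun t : ℝ => (t : EReal)) (𝓝[<] xF)) (𝓝 0) := by
  have hF0' : ∀ x, 0 ≤ F x := fun x => hFmono.le_of_tendsto hF0 x
  have hF1' : ∀ x, F x ≤ 1 := fun x => hFmono.ge_of_tendsto hF1 x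
  set S : ℝ → ℝ := fun x => 1 - F x with hSdef
  have hS : Antitone S := fun x y hxy => sub_le_sub_left (hFmono hxy) 1
  have hS0 : ∀ x, 0 ≤ S x := fun x => sub_nonneg.2 (hF1' x)
  have hG : ∀ x, 0 < 1 + ξ * x →
      Tendsto (fun n : ℕ => (n:ℝ) * S (a n * x + b n)) atTop (𝓝 ((1 + ξ * x) ^ (-1 / ξ))) :=
    fun x hx => pbd_log (fun n => F (a n * x + b n)) _ (fun _ => hF0' _) (hMDA x hx)
  have hH := pbd_pointwise S hS hS0 hξ a b ha hG
  have hpos : ∀ t : ℝ, (t : EReal) < xF → 0 < S t := by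
    intro t ht
    rw [hxF, lt_sSup_iff] at ht
    obtain ⟨y, ⟨x, rfl, hx⟩, hy⟩ := ht
    have := hFmono (EReal.coe_lt_coe_iff.1 hy).le
    simp only [hSdef]; linarith
  have hle : ∀ t : ℝ, 0 < S t → (t : EReal) ≤ xF := by
    intro t ht
    rw [hxF]
    exact le_sSup ⟨t, rfl, by simp only [hSdef] at ht; linarith⟩
  set L := Filter.comap (fun t : ℝ => (t : EReal)) (𝓝[<] xF) with hL
  have htend : Tendsto (fun t : ℝ => (t : EReal)) L (𝓝[<] xF) := tendsto_comap
  have hLlt : ∀ᶠ t in L, ((t : ℝ) : EReal) < xF := htend.eventually self_mem_nhdsWithin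
  have hLpos : ∀ᶠ t in L, 0 < S t := hLlt.mono hpos
  have hL0 : Tendsto S L (𝓝 0) := by
    rw [Metric.tendsto_nhds]
    intro ε hε
    have hS00 : Tendsto (fun n => S (a n * 0 + b n)) atTop (𝓝 0) := by
      have := (hG 0 (by simp)).mul (tendsto_inv_atTop_nhds_zero_nat (𝕜 := ℝ))
      rw [mul_zero] at this
      refine this.congr' ?_
      filter_upwards [eventually_gt_atTop 0] with n hn
      have : (n : ℝ) ≠ 0 := by positivity
      field_simp
    obtain ⟨x, hx0, hx⟩ : ∃ x : ℝ, 0 < x ∧ 0 < 1 + ξ * x := by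
      have h1 : 0 < |ξ| := by positivity
      refine ⟨1/(2*|ξ|), by positivity, ?_⟩
      have : ξ * (1/(2*|ξ|)) ≥ -(1/2) := by
        have h2 := neg_abs_le ξ
        have h3 : -|ξ| * (1/(2*|ξ|)) ≤ ξ * (1/(2*|ξ|)) := by gcongr
        have h4 : -|ξ| * (1/(2*|ξ|)) = -(1/2) := by field_simp
        linarith
      linarith
    obtain ⟨n, hn1, hn2⟩ := ((hS00.eventually (gt_mem_nhds hε)).and
      ((hG x hx).eventually (lt_mem_nhds (Real.rpow_pos_of_pos hx _)))).exists
    have hpx : 0 < S (a n * x + b n) := by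
      rcases (hS0 (a n * x + b n)).lt_or_eq with h | h
      · exact h
      · rw [← h, mul_zero] at hn2; exact absurd hn2 (lt_irrefl _)
    have hlt : ((a n * 0 + b n : ℝ) : EReal) < xF := by
      refine lt_of_lt_of_le (EReal.coe_lt_coe_iff.2 ?_) (hle _ hpx)
      have := mul_pos (ha n) hx0
      linarith
    filter_upwards [htend.eventually (mem_nhdsWithin_of_mem_nhds (lt_mem_nhds hlt))] with t ht
    rw [Real.dist_eq, sub_zero, abs_of_nonneg (hS0 t)]
    exact lt_of_le_of_lt (hS (EReal.coe_lt_coe_iff.1 ht).le) hn1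
  obtain ⟨N, hN, hloc, hunif⟩ := pbd_core S hS hS0 hξ a b ha hH L hLpos hL0
  refine ⟨fun t => a (N t), fun t _ => ha _, ?_⟩
  -- the discrepancy between the truncated and the untruncated tails
  have hjunk : ∀ ε, 0 < ε → ∀ᶠ t in L, ∀ x : ℝ, 0 ≤ x → ((t + x : ℝ) : EReal) < xF →
      |pbdH ξ (x / a (N t)) - (1 + ξ * x / a (N t)) ^ (-1/ξ)| < ε := by
    intro ε hε
    rcases hξ.lt_or_gt with hneg | hp
    · have hβ := pbd_exp_pos hneg
      have hy : Tendsto (fun y : ℝ => y ^ (-1/ξ)) (𝓝[>] 0) (𝓝 0) := by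
        have := (Real.continuousAt_rpow_const 0 (-1/ξ) (Or.inr hβ.le)).tendsto
        rw [Real.zero_rpow hβ.ne'] at this
        exact this.mono_left nhdsWithin_le_nhds
      obtain ⟨y, hy1, hy0⟩ := ((hy.eventually (gt_mem_nhds hε)).and self_mem_nhdsWithin).exists
      have hy0 : 0 < y := hy0
      have hend := pbd_endpoint S hS (fun n => -a n / ξ) (fun n => b n - a n / ξ)
        (fun n => div_pos_of_neg_of_neg (neg_neg_of_pos (ha n)) hneg) (-1/ξ) hβ (by
          intro z hz
          have hxy : 1 + ξ * ((z-1)/ξ) = z := by field_simp; ring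
          have := hG ((z-1)/ξ) (by rw [hxy]; exact hz)
          rw [hxy] at this
          refine this.congr fun n => ?_
          congr 2
          field_simp; ring) (y/2) (by positivity)
      filter_upwards [hN.eventually hend, hloc (y/2/(-ξ)) (div_pos (by positivity) (by linarith))]
        with t h1 h2 x hx hxt
      have h1 := h1 (t+x) (hpos _ hxt)
      set A := a (N t) with hA
      have hA0 : 0 < A := ha _
      rcases le_or_gt 0 (1 + ξ * (x/A)) with h3 | h3
      · rw [pbdH_of_pos h3, mul_div_assoc, sub_self, abs_zero]; exact hε
      · rw [pbdH_of_neg hneg h3.le, mul_div_assoc, zero_sub, abs_neg]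
        refine (Real.abs_rpow_le_abs_rpow _ _).trans_lt (lt_of_le_of_lt ?_ hy1)
        refine Real.rpow_le_rpow (abs_nonneg _) ?_ hβ.le
        rw [abs_of_neg h3]
        have h4 := (abs_lt.1 h2).1
        have h5 : x ≤ (y - (-1)) * (A / (-ξ)) := by
          have e1 : y/2/(-ξ) * A = y/2 * (A/(-ξ)) := by ring
          have e2 : -A/ξ = A/(-ξ) := by rw [div_neg, neg_div]
          have e3 : A/ξ = -(A/(-ξ)) := by rw [div_neg, neg_neg]
          rw [e1] at h4
          rw [e2, e3] at h1
          linarith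
        have h6 : -ξ * (x/A) ≤ y + 1 := by
          have hx' : 0 < -ξ := by linarith
          calc -ξ * (x/A) ≤ -ξ * (((y - (-1)) * (A / (-ξ)))/A) := by gcongr
            _ = y + 1 := by field_simp; ring
        linarith
    · refine Eventually.of_forall fun t x hx _ => ?_
      have := ha (N t)
      rw [pbdH_of_pos (by positivity), mul_div_assoc, sub_self, abs_zero]; exact hε
  rw [Metric.tendsto_nhds]
  intro ε hε
  filter_upwards [hunif (ε/4) (by positivity), hjunk (ε/4) (by positivity), hLpos] with t h1 h2 h3
  rw [Real.dist_eq, sub_zero, abs_of_nonneg (Real.sSup_nonneg (by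
    rintro v ⟨x, _, _, rfl⟩; exact abs_nonneg _))]
  refine lt_of_le_of_lt (Real.sSup_le (a := ε/2) ?_ (by positivity)) (by linarith)
  rintro v ⟨x, hx, hxt, rfl⟩
  have hA := ha (N t)
  have h1 := h1 (x / a (N t)) (by positivity)
  have h2 := h2 x hx hxt
  rw [mul_div_cancel₀ _ hA.ne'] at h1
  have h4 : (F (t+x) - F t) / (1 - F t) = 1 - S (t+x) / S t := by
    have : 1 - F t ≠ 0 := h3.ne'
    simp only [hSdef]; field_simp; ring
  rw [h4]
  rw [abs_lt] at h1 h2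
  rw [abs_le]; constructor <;> linarith
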